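/- arXiv:2108.07551 — 2 statements merged into one kernel-verified Lean document; each statement's English description precedes it below -/
import Mathlib

section
/- A finite simple graph G is chordal if and only if G has a perfect elimination order. -/
/-- A tree-decomposition of a graph `G` indexed by nodes of type `ι`. -/
structure TreeDecomp {V : Type} (G : SimpleGraph V) (ι : Type) where
  tree : SimpleGraph ι
  isTree : tree.IsTree
  bag : ι → Finset V
  bags_cover : ∀ v : V, ∃ i : ι, v ∈ bag i
  edges_covered : ∀ ⦃u v : V⦄, G.Adj u v → ∃ i : ι, u ∈ bag i ∧ v ∈ bag i
  bags_connected : ∀ v : V, (tree.induce {i : ι | v ∈ bag i}).Connected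

/-- The treewidth of `G`: the smallest `k` such that `G` has a tree-decomposition
all of whose bags have at most `k + 1` vertices (i.e. of width at most `k`). -/
noncomputable def treewidth {V : Type} (G : SimpleGraph V) : ℕ :=
  sInf { k : ℕ | ∃ (ι : Type) (td : TreeDecomp G ι), ∀ i : ι, (td.bag i).card ≤ k + 1 }

/-- The neighborhood `N_G(C)` of a vertex set `C`. -/
def nbhd {V : Type} (G : SimpleGraph V) (C : Set V) : Set V :=
  {v : V | v ∉ C ∧ ∃ u ∈ C, G.Adj u v}

/-- `S` separates `a` from `b` in `G`: `a, b ∉ S` and every walk from `a` to `b` meets `S`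
(so `a` and `b` lie in distinct components of `G` minus `S`). -/
def Separates {V : Type} (G : SimpleGraph V) (S : Set V) (a b : V) : Prop :=
  a ∉ S ∧ b ∉ S ∧ ∀ p : G.Walk a b, ∃ v ∈ p.support, v ∈ S

/-- `C` is a connected component of `G` minus `S`. -/
def IsCompOf {V : Type} (G : SimpleGraph V) (S : Set V) (C : Set V) : Prop :=
  C.Nonempty ∧ Disjoint C S ∧ (G.induce C).Connected ∧
    ∀ D : Set V, C ⊆ D → Disjoint D S → (G.induce D).Connected → D = C

/-- `S` is a separator of `G`: `G` minus `S` has more than one connected component. -/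
def IsSeparator {V : Type} (G : SimpleGraph V) (S : Set V) : Prop :=
  ∃ C D : Set V, IsCompOf G S C ∧ IsCompOf G S D ∧ C ≠ D

/-- `C` is a full component of `S` in `G`. -/
def IsFullCompOf {V : Type} (G : SimpleGraph V) (S : Set V) (C : Set V) : Prop :=
  IsCompOf G S C ∧ nbhd G C = S

/-- `S` is a minimal separator of `G`: it has at least two full components. -/
def IsMinSep {V : Type} (G : SimpleGraph V) (S : Set V) : Prop :=
  ∃ C D : Set V, IsFullCompOf G S C ∧ IsFullCompOf G S D ∧ C ≠ D

/-- `R` crosses `S` if `R` separates some pair of vertices of `S`. -/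
def Crosses {V : Type} (G : SimpleGraph V) (R S : Set V) : Prop :=
  ∃ a b : V, a ∈ S ∧ b ∈ S ∧ Separates G R a b

/-- `G` is chordal: every cycle with more than 3 vertices has a chord. -/
def IsChordal {V : Type} (G : SimpleGraph V) : Prop :=
  ∀ ⦃v : V⦄ (c : G.Walk v v), c.IsCycle → 3 < c.length →
    ∃ u w : V, u ∈ c.support ∧ w ∈ c.support ∧ G.Adj u w ∧ s(u, w) ∉ c.edges

/-- `H` is a triangulation of `G`. -/
def IsTriangulationOf {V : Type} (H G : SimpleGraph V) : Prop :=
  IsChordal H ∧ G ≤ H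

/-- `H` is a minimal triangulation of `G`. -/
def IsMinimalTriangulationOf {V : Type} (H G : SimpleGraph V) : Prop :=
  IsTriangulationOf H G ∧ ∀ H' : SimpleGraph V, IsTriangulationOf H' G → H' ≤ H → H' = H

/-- `K(S)`: the graph on the same vertex type whose edges join all pairs of
distinct vertices of `S`. -/
def completeOn {V : Type} (S : Set V) : SimpleGraph V :=
  SimpleGraph.fromRel (fun a b => a ∈ S ∧ b ∈ S)

/-- `s` is a maximal clique of `G`. -/
def IsMaximalClique {V : Type} (G : SimpleGraph V) (s : Set V) : Prop :=
  G.IsClique s ∧ ∀ t : Set V, G.IsClique t → s ⊆ t → s = t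

/-- `fill G td`: fill every bag of the tree-decomposition `td` into a clique. -/
def fill {V ι : Type} (G : SimpleGraph V) (td : TreeDecomp G ι) : SimpleGraph V :=
  G ⊔ SimpleGraph.fromRel (fun a b => ∃ i : ι, a ∈ td.bag i ∧ b ∈ td.bag i)

/-- The nodes of the maximal subtree `T(i,j)` of the tree containing `i` but not `j`
(for adjacent `i`, `j`): the nodes reachable from `i` after deleting the edge `{i, j}`. -/
def sideNodes {V ι : Type} {G : SimpleGraph V} (td : TreeDecomp G ι) (i j : ι) : Set ι :=
  {t : ι | (td.tree.deleteEdges {s(i, j)}).Reachable i t}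

/-- `V(i,j)`: the union of the bags of nodes in `T(i,j)`, with the vertices of the
bag of `j` removed. -/
def sideVerts {V ι : Type} {G : SimpleGraph V} (td : TreeDecomp G ι) (i j : ι) : Set V :=
  (⋃ t ∈ sideNodes td i j, (td.bag t : Set V)) \ (td.bag j : Set V)

/-- A perfect elimination order of `G`. -/
def IsPerfectElimOrder {V : Type} [Fintype V] (G : SimpleGraph V)
    (e : Fin (Fintype.card V) ≃ V) : Prop :=
  ∀ i : Fin (Fintype.card V),
    G.IsClique {u : V | G.Adj (e i) u ∧ ∃ j : Fin (Fintype.card V), i < j ∧ e j = u}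

/-- `H` is a minor of `G`, via the branch-set (minor model) characterization. -/
def IsMinorOf {W V : Type} (H : SimpleGraph W) (G : SimpleGraph V) : Prop :=
  ∃ B : W → Set V,
    (∀ w : W, (B w).Nonempty) ∧
    (∀ w : W, (G.induce (B w)).Connected) ∧
    (Pairwise fun w₁ w₂ : W => Disjoint (B w₁) (B w₂)) ∧
    ∀ ⦃w₁ w₂ : W⦄, H.Adj w₁ w₂ → ∃ a ∈ B w₁, ∃ b ∈ B w₂, G.Adj a b

/-- There is a clique minor of `G` minus `C` rooted on `R`, given by branch sets
`B v ∋ v` for `v ∈ R`: disjoint from `C`, pairwise disjoint, each connected, with an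
edge of `G` between every two of them. -/
def HasCliqueMinorRootedAvoiding {V : Type} (G : SimpleGraph V) (R C : Set V) : Prop :=
  ∃ B : R → Set V,
    (∀ v : R, (v : V) ∈ B v) ∧
    (∀ v : R, Disjoint (B v) C) ∧
    (∀ v : R, (G.induce (B v)).Connected) ∧
    (∀ u v : R, u ≠ v → Disjoint (B u) (B v)) ∧
    (∀ u v : R, u ≠ v → ∃ a ∈ B u, ∃ b ∈ B v, G.Adj a b)

/-- `S` is a minor-safe separator of `G`: for every component `C` of `G` minus `S`,
there is a clique minor of `G` minus `C` rooted on `N_G(C)`. -/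
def MinorSafe {V : Type} (G : SimpleGraph V) (S : Set V) : Prop :=
  ∀ C : Set V, IsCompOf G S C → HasCliqueMinorRootedAvoiding G (nbhd G C) C

/-!
Let `v` be a vertex of a chordal graph that is not universal, and let `C` be a component of the
graph minus the closed neighborhood of `v`. Two nonadjacent vertices of `N(C)` would be joined by a
shortest path with interior in `C`, which together with `v` would be a chordless cycle of length at
least four; so `N(C)` is a clique. By induction, `G[C ∪ N(C)]` has a simplicial vertex outside this
clique, hence in `C`, and it is simplicial in `G` because all its neighbors lie in `C ∪ N(C)`. With
a suitable choice of `v`, this shows that outside every clique that is not the whole graph there is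
a simplicial vertex. Removing simplicial vertices one at a time gives the order.

Conversely, on a cycle of length at least four the two cycle neighbors of the vertex that is
eliminated first are adjacent, and this edge is a chord.
-/

open Set SimpleGraph

section Walk

variable {V W : Type*} {G : SimpleGraph V} {H : SimpleGraph W} {u v x y : V}

lemma isChordless_of_length_eq_dist {p : G.Walk x y} (hp : p.length = G.dist x y) :
    p.IsChordless := by
  rw [Walk.isChordless_iff_forall_mem_edges]
  intro u w hu hw huw
  obtain ⟨i, rfl, hi⟩ := Walk.mem_support_iff_exists_getVert.1 hu
  obtain ⟨j, rfl, hj⟩ := Walk.mem_support_iff_exists_getVert.1 hw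
  wlog hij : i ≤ j generalizing i j
  · rw [Sym2.eq_swap]
    exact this j hj hw i hi hu huw.symm (by lia)
  have hne : i ≠ j := by
    rintro rfl
    exact huw.ne rfl
  have shortcut : G.dist x y ≤ ((p.take i).append (.cons huw (p.drop j))).length := dist_le _
  simp only [Walk.length_append, Walk.length_cons, Walk.take_length, Walk.drop_length] at shortcut
  obtain rfl : j = i + 1 := by lia
  exact p.mk_mem_edges_iff_exists.2 ⟨i, by lia, rfl⟩

lemma isChordless_map_iff (f : H ↪g G) {a b : W} (p : H.Walk a b) :
    (p.map f.toHom).IsChordless ↔ p.IsChordless := by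
  have mem_edges_map (u v : W) : s(f u, f v) ∈ (p.map f.toHom).edges ↔ s(u, v) ∈ p.edges := by
    rw [Walk.edges_map, ← List.mem_map_of_injective (Sym2.map.injective f.injective)]
    rfl
  simp only [Walk.isChordless_iff_forall_mem_edges, Walk.support_map]
  refine ⟨fun h u v hu hv huv ↦ ?_, fun h u' v' hu' hv' huv ↦ ?_⟩
  · exact (mem_edges_map u v).1
      (h (List.mem_map_of_mem hu) (List.mem_map_of_mem hv) (f.map_adj_iff.2 huv))
  · obtain ⟨u, hu, rfl⟩ := List.mem_map.1 hu'
    obtain ⟨v, hv, rfl⟩ := List.mem_map.1 hv'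
    exact (mem_edges_map u v).2 (h hu hv (f.map_adj_iff.1 huv))

lemma isChordless_rotate_iff [DecidableEq V] (c : G.Walk v v) (hu : u ∈ c.support) :
    (c.rotate u hu).IsChordless ↔ c.IsChordless := by
  simp only [Walk.isChordless_iff_forall_mem_edges, c.mem_support_rotate_iff,
    (c.rotate_edges u hu).mem_iff]

lemma isCycle_cons_concat {p : G.Walk x y} (hp : p.IsPath) (hxy : x ≠ y) (hv : v ∉ p.support)
    (hvx : G.Adj v x) (hyv : G.Adj y v) : (Walk.cons hvx (p.concat hyv)).IsCycle := by
  have hlen : p.length ≠ 0 := fun h ↦ hxy (Walk.eq_of_length_eq_zero h)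
  rw [Walk.isCycle_iff_isPath_tail_and_le_length]
  refine ⟨by simpa using hp.concat hv hyv, ?_⟩
  simp only [Walk.length_cons, Walk.length_concat]
  lia

lemma isChordless_cons_concat {p : G.Walk x y} (hp : p.IsChordless)
    (hv : ∀ z ∈ p.support, G.Adj v z → z = x ∨ z = y) (hvx : G.Adj v x) (hyv : G.Adj y v) :
    (Walk.cons hvx (p.concat hyv)).IsChordless := by
  have edge_at_v : ∀ z ∈ p.support, G.Adj v z →
      s(v, z) ∈ (Walk.cons hvx (p.concat hyv)).edges := by
    intro z hz hvz
    rcases hv z hz hvz with rfl | rfl <;> simp [Walk.edges_concat, Sym2.eq_swap]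
  have eq_or_mem : ∀ z ∈ (Walk.cons hvx (p.concat hyv)).support, z = v ∨ z ∈ p.support := by
    simp [Walk.support_concat, or_comm]
  rw [Walk.isChordless_iff_forall_mem_edges]
  intro a b ha hb hab
  rcases eq_or_mem a ha with rfl | hap <;> rcases eq_or_mem b hb with rfl | hbp
  · exact absurd rfl hab.ne
  · exact edge_at_v b hbp hab
  · rw [Sym2.eq_swap]
    exact edge_at_v a hap hab.symm
  · simp [Walk.edges_concat, hp.mem_edges hap hbp hab]

lemma snd_penultimate_notMem_edges {c : G.Walk v v} (hc : c.IsCycle) (hlen : 3 < c.length) :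
    s(c.snd, c.penultimate) ∉ c.edges := by
  have penultimate_ne : ∀ i ≤ 2, c.getVert i ≠ c.penultimate := fun i hi h ↦ by
    have := hc.getVert_injOn' (by simp; lia) (by simp) h
    lia
  have edges_eq : c.edges = s(v, c.snd) :: c.tail.edges := by
    rw [← Walk.edges_cons (c.adj_snd hc.not_nil), c.cons_tail_eq hc.not_nil]
  rw [edges_eq, List.mem_cons, not_or]
  refine ⟨fun h ↦ ?_, fun h ↦ ?_⟩
  · rcases Sym2.eq_iff.1 h with ⟨-, h⟩ | ⟨-, h⟩
    · exact penultimate_ne 1 (by lia) h.symm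
    · exact penultimate_ne 0 (by lia) (c.getVert_zero.trans h.symm)
  · have h2 : c.penultimate = c.tail.snd := hc.isPath_tail.eq_snd_of_mem_edges h
    exact penultimate_ne 2 le_rfl (c.getVert_tail.symm.trans h2.symm)

lemma not_isChordless_of_isClique {c : G.Walk v v} (hc : c.IsCycle) (hlen : 3 < c.length)
    (hu : u ∈ c.support) (hK : G.IsClique (G.neighborSet u ∩ {z | z ∈ c.support})) :
    ¬ c.IsChordless := by
  classical
  rw [← isChordless_rotate_iff c hu]
  set d := c.rotate u hu with hd
  have hdc : d.IsCycle := hc.rotate hu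
  have mem_nbrs : ∀ z ∈ d.support, G.Adj u z → z ∈ G.neighborSet u ∩ {z | z ∈ c.support} :=
    fun z hz huz ↦ ⟨huz, (c.mem_support_rotate_iff u hu).1 hz⟩
  have hsnd : d.snd ∈ d.support := d.getVert_mem_support 1
  have hpen : d.penultimate ∈ d.support := d.getVert_mem_support _
  have hadj : G.Adj d.snd d.penultimate :=
    hK (mem_nbrs _ hsnd (d.adj_snd hdc.not_nil))
      (mem_nbrs _ hpen (d.adj_penultimate hdc.not_nil).symm) hdc.snd_ne_penultimate
  exact fun h ↦ snd_penultimate_notMem_edges hdc (by simpa [hd] using hlen)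
    (h.mem_edges hsnd hpen hadj)

end Walk

section Component

variable {V : Type} {G : SimpleGraph V} {S C : Set V} {x z : V}

lemma neighborSet_subset_union_nbhd (hx : x ∈ C) : G.neighborSet x ⊆ C ∪ nbhd G C :=
  fun y hxy ↦ (em (y ∈ C)).imp_right fun hy ↦ ⟨hy, x, hx, hxy⟩

lemma connected_induce_insert (hC : (G.induce C).Preconnected) (hx : x ∈ nbhd G C) :
    (G.induce (insert x C)).Connected := by
  obtain ⟨-, c, hc, hcx⟩ := hx
  rw [Set.insert_eq]
  exact connected_induce_union .of_subsingleton hC rfl hc hcx.symm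

lemma exists_isCompOf_mem (hz : z ∉ S) : ∃ C, z ∈ C ∧ IsCompOf G S C := by
  let F : Set (Set V) := {D | z ∈ D ∧ Disjoint D S ∧ (G.induce D).Connected}
  have hF : {z} ∈ F := ⟨rfl, by simpa, .of_subsingleton⟩
  have hzF : z ∈ ⋃₀ F := ⟨_, hF, rfl⟩
  refine ⟨⋃₀ F, hzF, ⟨z, hzF⟩, disjoint_sUnion_left.2 fun D hD ↦ hD.2.1, ?_, ?_⟩
  · exact induce_sUnion_connected_of_pairwise_not_disjoint ⟨_, hF⟩
      (fun hD hE ↦ ⟨z, hD.1, hE.1⟩) fun hD ↦ hD.2.2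
  · intro D hFD hDS hD
    have hDF : D ∈ F := ⟨hFD hzF, hDS, hD⟩
    exact (subset_sUnion_of_mem hDF).antisymm hFD

lemma IsCompOf.nbhd_subset (hC : IsCompOf G S C) : nbhd G C ⊆ S := by
  obtain ⟨-, hCS, hconn, hmax⟩ := hC
  intro x hx
  by_contra hxS
  have hinsert : insert x C = C := hmax _ (subset_insert x C)
    (disjoint_insert_left.2 ⟨hxS, hCS⟩) (connected_induce_insert hconn.preconnected hx)
  exact hx.1 (hinsert ▸ mem_insert x C)

end Component

section Simplicial

variable {V : Type*} {G : SimpleGraph V} {S : Set V}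

/-- A vertex is simplicial if its neighborhood is a clique. -/
def IsSimplicial (G : SimpleGraph V) (v : V) : Prop :=
  G.IsClique (G.neighborSet v)

lemma isSimplicial_induce_iff {v : S} :
    IsSimplicial (G.induce S) v ↔ G.IsClique (G.neighborSet v ∩ S) := by
  constructor
  · rintro h a ⟨ha, haS⟩ b ⟨hb, hbS⟩ hab
    exact @h ⟨a, haS⟩ ha ⟨b, hbS⟩ hb (Subtype.coe_ne_coe.1 hab)
  · exact fun h a ha b hb hab ↦ h ⟨ha, a.2⟩ ⟨hb, b.2⟩ (Subtype.coe_ne_coe.2 hab)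

lemma IsSimplicial.of_induce {v : S} (hv : IsSimplicial (G.induce S) v)
    (hS : G.neighborSet v ⊆ S) : IsSimplicial G v := by
  rwa [isSimplicial_induce_iff, inter_eq_left.2 hS] at hv

end Simplicial

section Chordal

variable {V W : Type} {G : SimpleGraph V} {H : SimpleGraph W} {C K S : Set V} {v x y : V}

lemma isChordal_iff_isChordless : IsChordal G ↔
    ∀ ⦃v : V⦄ (c : G.Walk v v), c.IsCycle → 3 < c.length → ¬ c.IsChordless := by
  simp only [IsChordal, Walk.isChordless_iff_forall_mem_edges]
  push Not
  rfl

lemma IsChordal.of_embedding (hG : IsChordal G) (f : H ↪g G) : IsChordal H := by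
  rw [isChordal_iff_isChordless] at hG ⊢
  intro v c hc hlen
  rw [← isChordless_map_iff f]
  exact hG _ (hc.map f.injective) (by simpa using hlen)

lemma IsChordal.adj_of_isChordless (hG : IsChordal G) {p : G.Walk x y} (hp : p.IsPath)
    (hp' : p.IsChordless) (hxy : x ≠ y) (hvp : v ∉ p.support)
    (hv : ∀ z ∈ p.support, G.Adj v z → z = x ∨ z = y) (hvx : G.Adj v x) (hvy : G.Adj v y) :
    G.Adj x y := by
  have hshort : ¬ 3 < (Walk.cons hvx (p.concat hvy.symm)).length := fun hlen ↦
    isChordal_iff_isChordless.1 hG _ (isCycle_cons_concat hp hxy hvp hvx hvy.symm) hlen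
      (isChordless_cons_concat hp' hv hvx hvy.symm)
  have hpos : p.length ≠ 0 := fun h ↦ hxy (Walk.eq_of_length_eq_zero h)
  simp only [Walk.length_cons, Walk.length_concat] at hshort
  exact Walk.adj_of_length_eq_one (p := p) (by lia)

lemma IsChordal.isClique_nbhd (hG : IsChordal G) (hC : (G.induce C).Preconnected) (hv : v ∉ C)
    (hCv : nbhd G C ⊆ G.neighborSet v) : G.IsClique (nbhd G C) := by
  intro x hx y hy hxy
  have not_adj : ∀ z ∈ C, ¬ G.Adj v z := fun z hz hvz ↦
    (hCv (⟨hv, z, hz, hvz.symm⟩ : v ∈ nbhd G C)).ne rfl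
  let T : Set V := insert x (insert y C)
  have hT : (G.induce T).Connected := by
    refine connected_induce_insert (connected_induce_insert hC hy).preconnected ?_
    obtain ⟨hxC, c, hc, hcx⟩ := hx
    exact ⟨by simp [hxy, hxC], c, mem_insert_of_mem y hc, hcx⟩
  obtain ⟨p, hp, hdist⟩ := hT.exists_path_of_dist ⟨x, by simp [T]⟩ ⟨y, by simp [T]⟩
  let f : G.induce T ↪g G := Embedding.induce T
  have support_subset : ∀ z ∈ (p.map f.toHom).support, z ∈ T := by
    rintro z hz
    obtain ⟨z, -, rfl⟩ := List.mem_map.1 (Walk.support_map f.toHom p ▸ hz)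
    exact z.2
  refine hG.adj_of_isChordless (hp.map f.injective)
    ((isChordless_map_iff f p).2 (isChordless_of_length_eq_dist hdist)) hxy (v := v) ?_ ?_
    (hCv hx) (hCv hy)
  · intro h
    rcases support_subset v h with rfl | rfl | h
    exacts [(hCv hx).ne rfl, (hCv hy).ne rfl, hv h]
  · intro z hz hvz
    rcases support_subset z hz with rfl | rfl | h
    exacts [.inl rfl, .inr rfl, absurd hvz (not_adj z h)]

lemma IsChordal.exists_isClique_nbhd (hG : IsChordal G) (hv : ¬ G.IsUniversal v) :
    ∃ C : Set V, C.Nonempty ∧ v ∉ C ∪ nbhd G C ∧ (∀ z ∈ C, ¬ G.Adj v z) ∧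
      G.IsClique (nbhd G C) := by
  obtain ⟨z, hvz, hnadj⟩ : ∃ z, v ≠ z ∧ ¬ G.Adj v z := by simpa [IsUniversal] using hv
  obtain ⟨C, hzC, hC⟩ := exists_isCompOf_mem (G := G) (S := insert v (G.neighborSet v)) (z := z)
    (by simp [hvz.symm, hnadj])
  have hdisj : ∀ z ∈ C, z ≠ v ∧ ¬ G.Adj v z := fun z hz ↦ by
    simpa using disjoint_left.1 hC.2.1 hz
  have hvC : v ∉ C := fun h ↦ (hdisj v h).1 rfl
  have hvN : v ∉ nbhd G C := fun ⟨_, c, hc, hcv⟩ ↦ (hdisj c hc).2 hcv.symm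
  have hCv : nbhd G C ⊆ G.neighborSet v := (subset_insert_iff_of_notMem hvN).1 hC.nbhd_subset
  exact ⟨C, ⟨z, hzC⟩, by simp [hvC, hvN], fun z hz ↦ (hdisj z hz).2,
    hG.isClique_nbhd hC.2.2.1.preconnected hvC hCv⟩

theorem IsChordal.exists_isSimplicial_notMem [Finite V] (hG : IsChordal G) (hK : G.IsClique K)
    (hne : K ≠ univ) : ∃ w ∉ K, IsSimplicial G w := by
  induction hn : Nat.card V using Nat.strong_induction_on generalizing V with
  | _ n ih =>
  subst hn
  have exists_not_adj : ∀ v, ¬ G.IsUniversal v → ∃ w ≠ v, ¬ G.Adj v w ∧ IsSimplicial G w := by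
    intro v hv
    obtain ⟨C, ⟨z, hz⟩, hvU, hCv, hN⟩ := hG.exists_isClique_nbhd hv
    let U : Set V := C ∪ nbhd G C
    have hcard : Nat.card U < Nat.card V := Finite.card_subtype_lt hvU
    obtain ⟨w, hw, hws⟩ := ih _ hcard (hG.of_embedding (Embedding.induce U))
      (K := Subtype.val ⁻¹' nbhd G C)
      (fun a ha b hb hab ↦ hN ha hb (Subtype.coe_ne_coe.2 hab))
      (fun h ↦ (eq_univ_iff_forall.1 h ⟨z, .inl hz⟩).1 hz) rfl
    have hwC : (w : V) ∈ C := w.2.resolve_right hw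
    exact ⟨w, fun h ↦ hvU (h ▸ w.2), hCv w hwC, hws.of_induce (neighborSet_subset_union_nbhd hwC)⟩
  by_cases hKuniv : ∀ v ∈ K, G.IsUniversal v
  · by_cases hGuniv : ∀ v, G.IsUniversal v
    · obtain ⟨w, hw⟩ := (ne_univ_iff_exists_notMem K).1 hne
      exact ⟨w, hw, fun a _ b _ hab ↦ hGuniv a hab⟩
    · obtain ⟨v, hv⟩ := not_forall.1 hGuniv
      obtain ⟨w, hwv, hvw, hw⟩ := exists_not_adj v hv
      exact ⟨w, fun hwK ↦ hvw (hKuniv w hwK hwv).symm, hw⟩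
  · push Not at hKuniv
    obtain ⟨v, hvK, hv⟩ := hKuniv
    obtain ⟨w, hwv, hvw, hw⟩ := exists_not_adj v hv
    exact ⟨w, fun hwK ↦ hvw (hK hvK hwK hwv.symm), hw⟩

lemma IsChordal.exists_isClique_neighborSet_inter (hG : IsChordal G) (hfin : S.Finite)
    (hS : S.Nonempty) : ∃ v ∈ S, G.IsClique (G.neighborSet v ∩ S) := by
  have := hfin.to_subtype
  have := hS.to_subtype
  obtain ⟨w, -, hw⟩ := (hG.of_embedding (Embedding.induce S)).exists_isSimplicial_notMem
    (K := ∅) (by simp) empty_ne_univ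
  exact ⟨w, w.2, isSimplicial_induce_iff.1 hw⟩

end Chordal

section Order

lemma exists_injective_range_eq {α : Type*} {P : α → Set α → Prop}
    (hP : ∀ S : Set α, S.Finite → S.Nonempty → ∃ a ∈ S, P a S) {n : ℕ} {S : Set α}
    (hS : S.Finite) (hn : S.ncard = n) :
    ∃ f : Fin n → α, Function.Injective f ∧ range f = S ∧ ∀ i, P (f i) (f '' Ici i) := by
  induction n generalizing S with
  | zero =>
    obtain rfl := (ncard_eq_zero hS).1 hn
    exact ⟨Fin.elim0, fun i ↦ i.elim0, range_eq_empty _, fun i ↦ i.elim0⟩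
  | succ n ih =>
    obtain ⟨a, ha, haP⟩ := hP S hS (nonempty_of_ncard_ne_zero (by lia))
    have hcard : (S \ {a}).ncard = n := by
      have := ncard_sdiff_singleton_add_one ha hS
      lia
    obtain ⟨f, hf, hrange, hfP⟩ := ih hS.sdiff hcard
    have hcons : range (Fin.cons a f : Fin (n + 1) → α) = S := by
      rw [Fin.range_cons, hrange, insert_sdiff_singleton, insert_eq_of_mem ha]
    refine ⟨Fin.cons a f, Fin.cons_injective_iff.2 ⟨by simp [hrange], hf⟩, hcons, fun i ↦ ?_⟩
    cases i using Fin.cases with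
    | zero =>
      have himage : (Fin.cons a f : Fin (n + 1) → α) '' Ici 0 = S := by
        rw [← hcons, ← image_univ, ← bot_eq_zero, Ici_bot]
      rwa [himage]
    | succ i =>
      have himage : (Fin.cons a f : Fin (n + 1) → α) '' Ici i.succ = f '' Ici i := by
        rw [← Fin.image_succ_Ici, image_image]
        simp only [Fin.cons_succ]
      rw [himage]
      exact hfP i

lemma exists_equiv_fin_forall {α : Type*} [Fintype α] {P : α → Set α → Prop}
    (hP : ∀ S : Set α, S.Nonempty → ∃ a ∈ S, P a S) :
    ∃ e : Fin (Fintype.card α) ≃ α, ∀ i, P (e i) (e '' Ici i) := by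
  obtain ⟨f, hf, hrange, hfP⟩ := exists_injective_range_eq (fun S _ ↦ hP S) (toFinite univ)
    (by rw [ncard_univ, Nat.card_eq_fintype_card])
  exact ⟨.ofBijective f ⟨hf, range_eq_univ.1 hrange⟩, hfP⟩

variable {V : Type} [Fintype V] {G : SimpleGraph V} {e : Fin (Fintype.card V) ≃ V}

lemma isPerfectElimOrder_iff :
    IsPerfectElimOrder G e ↔ ∀ i, G.IsClique (G.neighborSet (e i) ∩ e '' Ici i) := by
  refine forall_congr' fun i ↦ ?_
  congr! 1
  ext u
  refine and_congr_right fun hu ↦ exists_congr fun j ↦ and_congr_left ?_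
  rintro rfl
  exact ⟨le_of_lt, fun hij ↦ lt_of_le_of_ne hij fun h ↦ hu.ne (congrArg e h)⟩

theorem IsPerfectElimOrder.isChordal (he : IsPerfectElimOrder G e) : IsChordal G := by
  rw [isPerfectElimOrder_iff] at he
  rw [isChordal_iff_isChordless]
  intro v c hc hlen
  obtain ⟨u, hu, hmin⟩ :=
    exists_min_image {z | z ∈ c.support} e.symm (toFinite _) ⟨v, c.start_mem_support⟩
  have support_subset : {z | z ∈ c.support} ⊆ e '' Ici (e.symm u) := fun z hz ↦
    ⟨e.symm z, hmin z hz, e.apply_symm_apply z⟩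
  refine not_isChordless_of_isClique hc hlen hu ((he (e.symm u)).subset ?_)
  rw [e.apply_symm_apply]
  exact inter_subset_inter_right _ support_subset

end Order

/-- a finite graph is chordal iff it has a perfect elimination order. -/
theorem chordal_iff_perfectElimOrder {V : Type} [Fintype V] (G : SimpleGraph V) :
    IsChordal G ↔ ∃ e : Fin (Fintype.card V) ≃ V, IsPerfectElimOrder G e := by
  refine ⟨fun hG ↦ ?_, fun ⟨_, he⟩ ↦ he.isChordal⟩
  simp only [isPerfectElimOrder_iff]
  exact exists_equiv_fin_forall fun S hS ↦ hG.exists_isClique_neighborSet_inter S.toFinite hS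
end

section
/- Let S be a clique minimal separator of a finite simple graph G. Then tw(G) equals the maximum of tw(G[C ∪ N_G(C)]) over all connected components C of G minus S. -/
/-!
Restricting a tree-decomposition of `G` to a subgraph does not increase its width, so no
`G[C ∪ N(C)]` has larger treewidth than `G`. Conversely, subtrees of a tree have the Helly
property, so in a tree-decomposition of `G[C ∪ N(C)]` the clique `S ∩ (C ∪ N(C))` lies in a single
bag. Joining such a node, for every component `C`, to one new node with bag `S` glues the
decompositions of all the `G[C ∪ N(C)]` to a tree-decomposition of `G`. The new bag is not too
large because `S` is a clique of `G[C ∪ N(C)]` for a full component `C`.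
-/

open SimpleGraph

section Cuts

variable {V : Type*} {G : SimpleGraph V} {A B : Set V} {u v : V}

theorem exists_adj_mem_notMem_of_reachable (h : G.Reachable u v) (hu : u ∈ A) (hv : v ∉ A) :
    ∃ x ∈ A, ∃ y ∉ A, G.Adj x y := by
  obtain ⟨p⟩ := h
  obtain ⟨d, -, hfst, hsnd⟩ := p.exists_boundary_dart A hu hv
  exact ⟨d.fst, hfst, d.snd, hsnd, d.adj⟩

theorem exists_adj_inter_diff_of_preconnected_induce (hB : (G.induce B).Preconnected)
    (hu : u ∈ B ∩ A) (hv : v ∈ B \ A) : ∃ x ∈ B ∩ A, ∃ y ∈ B \ A, G.Adj x y := by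
  obtain ⟨x, hx, y, hy, hxy⟩ := exists_adj_mem_notMem_of_reachable (A := Subtype.val ⁻¹' A)
    (hB ⟨u, hu.1⟩ ⟨v, hv.1⟩) hu.2 hv.2
  exact ⟨x, ⟨x.2, hx⟩, y, ⟨y.2, hy⟩, hxy⟩

theorem isBridge_iff_exists_cut :
    G.IsBridge s(u, v) ↔
      ∃ A : Set V, u ∈ A ∧ v ∉ A ∧ ∀ x ∈ A, ∀ y ∉ A, G.Adj x y → x = u ∧ y = v := by
  rw [isBridge_iff]
  constructor
  · intro h
    refine ⟨{x | (G.deleteEdges {s(u, v)}).Reachable u x}, .rfl, h, fun x hx y hy hxy => ?_⟩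
    have hedge : s(x, y) = s(u, v) := by
      by_contra hne
      exact hy (hx.trans (Adj.reachable (by simpa [hxy] using hne)))
    obtain hxy | ⟨rfl, -⟩ := Sym2.eq_iff.1 hedge
    · exact hxy
    · exact absurd hx h
  · rintro ⟨A, hu, hv, hA⟩ h
    obtain ⟨x, hx, y, hy, hxy⟩ := exists_adj_mem_notMem_of_reachable h hu hv
    rw [deleteEdges_adj] at hxy
    obtain ⟨rfl, rfl⟩ := hA x hx y hy hxy.1
    exact hxy.2 rfl

theorem eq_and_eq_of_adj_of_isAcyclic (hG : G.IsAcyclic) (hA : (G.induce A).Preconnected)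
    (hB : (G.induce B).Preconnected) (hAB : Disjoint A B) {a a' b b' : V} (ha : a ∈ A)
    (ha' : a' ∈ A) (hb : b ∈ B) (hb' : b' ∈ B) (hab : G.Adj a b) (hab' : G.Adj a' b') :
    a' = a ∧ b' = b := by
  obtain ⟨X, haX, hbX, hX⟩ :=
    isBridge_iff_exists_cut.1 (isAcyclic_iff_forall_adj_isBridge.1 hG hab)
  have hAX : a' ∈ X := by
    by_contra ha'X
    obtain ⟨x, hx, y, hy, hxy⟩ :=
      exists_adj_inter_diff_of_preconnected_induce hA ⟨ha, haX⟩ ⟨ha', ha'X⟩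
    obtain ⟨-, rfl⟩ := hX x hx.2 y hy.2 hxy
    exact Set.disjoint_left.1 hAB hy.1 hb
  have hBX : b' ∉ X := by
    intro hb'X
    obtain ⟨x, hx, y, hy, hxy⟩ :=
      exists_adj_inter_diff_of_preconnected_induce hB ⟨hb', hb'X⟩ ⟨hb, hbX⟩
    obtain ⟨rfl, -⟩ := hX x hx.2 y hy.2 hxy
    exact Set.disjoint_left.1 hAB ha hx.1
  exact hX a' hAX b' hBX hab'

theorem connected_induce_image {W : Type*} {H : SimpleGraph W} (f : G →g H)
    (hA : (G.induce A).Connected) : (H.induce (f '' A)).Connected :=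
  hA.map (induceHom f (Set.mapsTo_image f A)) (Set.surjective_mapsTo_image_restrict f A)

end Cuts

namespace IsCompOf

variable {V : Type} {G : SimpleGraph V} {S C D : Set V} {u v : V}

theorem subset_of_connected (hC : IsCompOf G S C) (hDS : Disjoint D S)
    (hD : (G.induce D).Connected) (hCD : (C ∩ D).Nonempty) : D ⊆ C := by
  obtain ⟨-, hCS, hconn, hmax⟩ := hC
  rw [← hmax (C ∪ D) Set.subset_union_left (hCS.union_left hDS)
    (induce_union_connected hconn.preconnected hD.preconnected hCD)]
  exact Set.subset_union_right

theorem eq_of_mem (hC : IsCompOf G S C) (hD : IsCompOf G S D) (hvC : v ∈ C) (hvD : v ∈ D) :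
    C = D :=
  (hD.subset_of_connected hC.2.1 hC.2.2.1 ⟨v, hvD, hvC⟩).antisymm
    (hC.subset_of_connected hD.2.1 hD.2.2.1 ⟨v, hvC, hvD⟩)

theorem nbhd_subset_s11 (hC : IsCompOf G S C) : nbhd G C ⊆ S := by
  rintro v ⟨hvC, u, huC, huv⟩
  by_contra hvS
  have huS : u ∉ S := Set.disjoint_left.1 hC.2.1 huC
  refine hvC (hC.subset_of_connected (D := {u, v}) ?_ (induce_pair_connected_of_adj huv)
    ⟨u, huC, by simp⟩ (by simp))
  simpa using ⟨huS, hvS⟩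

theorem mem_of_mem_union_nbhd (hC : IsCompOf G S C) (hv : v ∈ C ∪ nbhd G C) (hvS : v ∉ S) :
    v ∈ C :=
  hv.resolve_right fun h => hvS (hC.nbhd_subset_s11 h)

theorem exists_mem (G : SimpleGraph V) (hv : v ∉ S) : ∃ C, IsCompOf G S C ∧ v ∈ C := by
  set 𝒟 : Set (Set V) := {D | v ∈ D ∧ Disjoint D S ∧ (G.induce D).Connected}
  have hsingleton : {v} ∈ 𝒟 := ⟨rfl, by simpa using hv, .of_subsingleton⟩
  have hvC : v ∈ ⋃₀ 𝒟 := ⟨{v}, hsingleton, rfl⟩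
  refine ⟨⋃₀ 𝒟, ⟨⟨v, hvC⟩, Set.disjoint_sUnion_left.2 fun D hD => hD.2.1, ?_, ?_⟩, hvC⟩
  · exact induce_sUnion_connected_of_pairwise_not_disjoint ⟨_, hsingleton⟩
      (fun {D E} hD hE => ⟨v, hD.1, hE.1⟩) (fun hD => hD.2.2)
  · intro D hCD hDS hD
    have hD𝒟 : D ∈ 𝒟 := ⟨hCD hvC, hDS, hD⟩
    exact (Set.subset_sUnion_of_mem hD𝒟).antisymm hCD

theorem exists_mem_union_nbhd_of_adj (huv : G.Adj u v) (hu : u ∉ S) :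
    ∃ C, IsCompOf G S C ∧ u ∈ C ∪ nbhd G C ∧ v ∈ C ∪ nbhd G C := by
  obtain ⟨C, hC, huC⟩ := exists_mem G hu
  by_cases hvC : v ∈ C
  · exact ⟨C, hC, .inl huC, .inl hvC⟩
  · exact ⟨C, hC, .inl huC, .inr ⟨hvC, u, huC, huv⟩⟩

end IsCompOf

theorem exists_gate_of_isTree {ι : Type} {T : SimpleGraph ι} (hT : T.IsTree) {A : Set ι}
    (hA : (T.induce A).Connected) {i : ι} (hi : i ∉ A) :
    ∃ j ∈ A, ∀ B : Set ι, (T.induce B).Preconnected → i ∈ B → (A ∩ B).Nonempty → j ∈ B := by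
  obtain ⟨⟨w, hw⟩⟩ := hA.nonempty
  obtain ⟨C, hC, hiC⟩ := IsCompOf.exists_mem T hi
  have mem_of_adj : ∀ x ∈ C, ∀ y ∉ C, T.Adj x y → y ∈ A := fun x hx y hy hxy =>
    hC.nbhd_subset_s11 ⟨hy, x, hx, hxy⟩
  obtain ⟨a, haC, j, hjC, haj⟩ := exists_adj_mem_notMem_of_reachable
    (hT.connected.preconnected i w) hiC (Set.disjoint_right.1 hC.2.1 hw)
  have hjA := mem_of_adj a haC j hjC haj
  refine ⟨j, hjA, fun B hB hiB ⟨x, hxA, hxB⟩ => ?_⟩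
  obtain ⟨b, hb, k, hk, hbk⟩ := exists_adj_inter_diff_of_preconnected_induce hB ⟨hiB, hiC⟩
    ⟨hxB, Set.disjoint_right.1 hC.2.1 hxA⟩
  obtain ⟨-, rfl⟩ := eq_and_eq_of_adj_of_isAcyclic hT.isAcyclic hC.2.2.1.preconnected
    hA.preconnected hC.2.1 haC hb.2 hjA (mem_of_adj b hb.2 k hk.2 hbk) haj hbk
  exact hk.1

section Bouquet

variable {κ : Type*} {ι : κ → Type*} (T : ∀ c, SimpleGraph (ι c)) (r : ∀ c, ι c)

/-- Adjacency in the bouquet of the rooted graphs `(T c, r c)`. The node `i` of the part `T c` is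
encoded as `some ⟨c, i⟩`, the centre as `none`. -/
inductive BouquetAdj : Option (Σ c, ι c) → Option (Σ c, ι c) → Prop
  | part {c : κ} {i j : ι c} (h : (T c).Adj i j) : BouquetAdj (some ⟨c, i⟩) (some ⟨c, j⟩)
  | rootCentre (c : κ) : BouquetAdj (some ⟨c, r c⟩) none
  | centreRoot (c : κ) : BouquetAdj none (some ⟨c, r c⟩)

/-- The bouquet of the rooted graphs `(T c, r c)`: their disjoint union together with a new vertex,
the centre, joined to every root. It is the tree underlying a glued tree-decomposition. -/
def bouquet : SimpleGraph (Option (Σ c, ι c)) where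
  Adj := BouquetAdj T r
  symm := ⟨by
    rintro _ _ (h | c | c)
    exacts [.part h.symm, .centreRoot c, .rootCentre c]⟩
  loopless := ⟨by
    rintro _ (h | _ | _)
    exact h.ne rfl⟩

/-- The inclusion of the part `T c` into the bouquet. -/
def bouquetInclusion (c : κ) : T c →g bouquet T r where
  toFun i := some ⟨c, i⟩
  map_rel' := .part

open Classical in
/-- The retraction of the bouquet onto its part `c`, sending everything outside this part to the
root `r c`. -/
noncomputable def bouquetRetract (c : κ) : Option (Σ c, ι c) → ι c
  | none => r c
  | some x => if h : x.1 = c then h ▸ x.2 else r c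

theorem bouquetRetract_none (c : κ) : bouquetRetract r c none = r c := rfl

theorem bouquetRetract_self (c : κ) (i : ι c) : bouquetRetract r c (some ⟨c, i⟩) = i := by
  simp [bouquetRetract]

theorem bouquetRetract_of_ne {c d : κ} (h : d ≠ c) (i : ι d) :
    bouquetRetract r c (some ⟨d, i⟩) = r c := by
  simp [bouquetRetract, h]

theorem bouquetRetract_root (c d : κ) : bouquetRetract r c (some ⟨d, r d⟩) = r c := by
  obtain rfl | h := eq_or_ne d c
  · exact bouquetRetract_self r d (r d)
  · exact bouquetRetract_of_ne r h _

variable {T r}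

theorem isBridge_bouquet_root (c : κ) : (bouquet T r).IsBridge s(some ⟨c, r c⟩, none) := by
  refine isBridge_iff_exists_cut.2
    ⟨Set.range (bouquetInclusion T r c), ⟨r c, rfl⟩, by simp [bouquetInclusion], ?_⟩
  rintro _ ⟨i, rfl⟩ y hy h
  cases h with
  | part h => exact absurd ⟨_, rfl⟩ hy
  | rootCentre => exact ⟨rfl, rfl⟩

theorem isBridge_bouquet_part {c : κ} {i j : ι c} (h : (T c).IsBridge s(i, j)) :
    (bouquet T r).IsBridge s(some ⟨c, i⟩, some ⟨c, j⟩) := by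
  obtain ⟨A, hi, hj, hA⟩ := isBridge_iff_exists_cut.1 h
  refine isBridge_iff_exists_cut.2 ⟨bouquetRetract r c ⁻¹' A,
    by simpa [bouquetRetract_self], by simpa [bouquetRetract_self], ?_⟩
  rintro _ hx _ hy (@⟨d, k, l, hkl⟩ | d | d)
  · obtain rfl | hd := eq_or_ne d c
    · simp only [Set.mem_preimage, bouquetRetract_self] at hx hy
      obtain ⟨rfl, rfl⟩ := hA k hx l hy hkl
      exact ⟨rfl, rfl⟩
    · simp only [Set.mem_preimage, bouquetRetract_of_ne r hd] at hx hy
      exact absurd hx hy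
  all_goals
    simp only [Set.mem_preimage, bouquetRetract_root, bouquetRetract_none] at hx hy
    exact absurd hx hy

theorem isAcyclic_bouquet (hT : ∀ c, (T c).IsAcyclic) : (bouquet T r).IsAcyclic := by
  rw [isAcyclic_iff_forall_adj_isBridge]
  rintro _ _ (h | c | c)
  · exact isBridge_bouquet_part (isAcyclic_iff_forall_adj_isBridge.1 (hT _) h)
  · exact isBridge_bouquet_root c
  · rw [Sym2.eq_swap]
    exact isBridge_bouquet_root c

theorem connected_induce_bouquet {X : Set (Option (Σ c, ι c))} (hX : none ∈ X)
    (hpart : ∀ c i, some ⟨c, i⟩ ∈ X → some ⟨c, r c⟩ ∈ X ∧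
      ((T c).induce (bouquetInclusion T r c ⁻¹' X)).Preconnected) :
    ((bouquet T r).induce X).Connected := by
  refine induce_connected_of_patches none hX fun {x} hx => ?_
  obtain _ | ⟨c, i⟩ := x
  · exact ⟨X, subset_rfl, hX, hX, .rfl⟩
  obtain ⟨hroot, hpre⟩ := hpart c i hx
  have hspoke : ((bouquet T r).induce {some ⟨c, r c⟩, none}).Connected :=
    induce_pair_connected_of_adj (BouquetAdj.rootCentre c)
  have hconn : ((bouquet T r).induce ({some ⟨c, r c⟩, none} ∪
      bouquetInclusion T r c '' (bouquetInclusion T r c ⁻¹' X))).Connected :=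
    induce_union_connected hspoke.preconnected
      (connected_induce_image _ { preconnected := hpre, nonempty := ⟨⟨r c, hroot⟩⟩ }).preconnected
      ⟨some ⟨c, r c⟩, by simp, r c, hroot, rfl⟩
  refine ⟨_, ?_, .inl (by simp), .inr ⟨i, hx, rfl⟩, hconn.preconnected _ _⟩
  exact Set.union_subset (Set.pair_subset hroot hX) (Set.image_preimage_subset _ _)

theorem isTree_bouquet (hT : ∀ c, (T c).IsTree) : (bouquet T r).IsTree where
  connected := (induceUnivIso _).connected_iff.1 <| connected_induce_bouquet (Set.mem_univ _)
    fun c _ _ =>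
      ⟨Set.mem_univ _, (induceUnivIso _).preconnected_iff.2 (hT c).connected.preconnected⟩
  isAcyclic := isAcyclic_bouquet fun c => (hT c).isAcyclic

end Bouquet

/-- The sets `U c` separate `G` along `S`: they cover all vertices outside `S` and all edges not
contained in `S`, and any two of them meet only within `S`. -/
structure IsSeparationAlong {V κ : Type*} (G : SimpleGraph V) (S : Set V) (U : κ → Set V) :
    Prop where
  exists_mem : ∀ v ∉ S, ∃ c, v ∈ U c
  exists_of_adj : ∀ u v, G.Adj u v → (u ∈ S ∧ v ∈ S) ∨ ∃ c, u ∈ U c ∧ v ∈ U c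
  eq_of_mem : ∀ c d, ∀ v ∉ S, v ∈ U c → v ∈ U d → c = d

theorem isSeparationAlong_components {V : Type} (G : SimpleGraph V) (S : Set V) :
    IsSeparationAlong G S fun C : {C // IsCompOf G S C} => C.1 ∪ nbhd G C.1 where
  exists_mem v hv := by
    obtain ⟨C, hC, hvC⟩ := IsCompOf.exists_mem G hv
    exact ⟨⟨C, hC⟩, .inl hvC⟩
  exists_of_adj u v huv := by
    by_cases hu : u ∈ S
    · by_cases hv : v ∈ S
      · exact .inl ⟨hu, hv⟩
      · obtain ⟨C, hC, hvC, huC⟩ := IsCompOf.exists_mem_union_nbhd_of_adj huv.symm hv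
        exact .inr ⟨⟨C, hC⟩, huC, hvC⟩
    · obtain ⟨C, hC, huC, hvC⟩ := IsCompOf.exists_mem_union_nbhd_of_adj huv hu
      exact .inr ⟨⟨C, hC⟩, huC, hvC⟩
  eq_of_mem C D _ hv hvC hvD := Subtype.ext <|
    C.2.eq_of_mem D.2 (C.2.mem_of_mem_union_nbhd hvC hv) (D.2.mem_of_mem_union_nbhd hvD hv)

namespace TreeDecomp

variable {V : Type} {G : SimpleGraph V}

-- Induction on the clique: when the new vertex `v` is not in the bag `i` found so far, the gate of
-- the subtree of `v` towards `i` lies in the subtree of every vertex of the clique.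
theorem exists_bag_of_isClique {ι : Type} (td : TreeDecomp G ι) {K : Set V} (hfin : K.Finite)
    (hK : G.IsClique K) : ∃ i, K ⊆ td.bag i := by
  induction K, hfin using Set.Finite.induction_on with
  | empty =>
    obtain ⟨i⟩ := td.isTree.connected.nonempty
    exact ⟨i, Set.empty_subset _⟩
  | @insert v K hv _ ih =>
    obtain ⟨i, hi⟩ := ih (hK.subset (Set.subset_insert v K))
    by_cases hvi : v ∈ td.bag i
    · exact ⟨i, Set.insert_subset hvi hi⟩
    obtain ⟨j, hj, hgate⟩ := exists_gate_of_isTree td.isTree (td.bags_connected v) (i := i) hvi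
    refine ⟨j, Set.insert_subset hj fun u hu => ?_⟩
    have hvu : G.Adj v u := hK (.inl rfl) (.inr hu) (ne_of_mem_of_not_mem hu hv).symm
    exact hgate {i | u ∈ td.bag i} (td.bags_connected u).preconnected (hi hu)
      (td.edges_covered hvu)

/-- The tree-decomposition with a single bag, consisting of all vertices. -/
def single [Fintype V] (G : SimpleGraph V) : TreeDecomp G Unit where
  tree := ⊥
  isTree := .of_subsingleton
  bag _ := Finset.univ
  bags_cover v := ⟨(), Finset.mem_univ v⟩
  edges_covered u v _ := ⟨(), Finset.mem_univ u, Finset.mem_univ v⟩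
  bags_connected v :=
    have : Nonempty {_i : Unit | v ∈ Finset.univ} := ⟨⟨(), Finset.mem_univ v⟩⟩
    .of_subsingleton

/-- The tree-decomposition of a graph `H` induced by one of `G` through a copy of `H` in `G`. -/
noncomputable def comap {W ι : Type} {H : SimpleGraph W} (td : TreeDecomp G ι) (f : Copy H G) :
    TreeDecomp H ι where
  tree := td.tree
  isTree := td.isTree
  bag i := (td.bag i).preimage f f.injective.injOn
  bags_cover w := by simpa using td.bags_cover (f w)
  edges_covered u v h := by simpa using td.edges_covered (f.toHom.map_adj h)
  bags_connected w := by
    have hset : {i | w ∈ (td.bag i).preimage f f.injective.injOn} = {i | f w ∈ td.bag i} :=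
      Set.ext fun _ => Finset.mem_preimage
    rw [hset]
    exact td.bags_connected (f w)

section Glue

variable {κ : Type} {ι : κ → Type} {U : κ → Set V} (S : Finset V)
  (td : ∀ c, TreeDecomp (G.induce (U c)) (ι c)) (r : ∀ c, ι c)

/-- The bags of the tree-decomposition glued from the `td c`: the centre gets the bag `S`, all
other nodes keep theirs. -/
def glueBag : Option (Σ c, ι c) → Finset V
  | none => S
  | some x => ((td x.1).bag x.2).map (Function.Embedding.subtype _)

theorem mem_glueBag_some {c : κ} {i : ι c} {v : V} :
    v ∈ glueBag S td (some ⟨c, i⟩) ↔ ∃ hv : v ∈ U c, ⟨v, hv⟩ ∈ (td c).bag i := by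
  simp [glueBag]

variable {S} in
theorem connected_glueBag_of_mem (hr : ∀ c (x : U c), (x : V) ∈ S → x ∈ (td c).bag (r c)) {v : V}
    (hv : v ∈ S) :
    ((bouquet (fun c => (td c).tree) r).induce {x | v ∈ glueBag S td x}).Connected := by
  refine connected_induce_bouquet hv fun c i hi => ?_
  obtain ⟨hvU, -⟩ := (mem_glueBag_some S td).1 hi
  refine ⟨(mem_glueBag_some S td).2 ⟨hvU, hr c ⟨v, hvU⟩ hv⟩, ?_⟩
  have hpart : bouquetInclusion (fun c => (td c).tree) r c ⁻¹' {x | v ∈ glueBag S td x} =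
      {i | ⟨v, hvU⟩ ∈ (td c).bag i} :=
    Set.ext fun j => (mem_glueBag_some S td).trans (exists_prop_of_true hvU)
  rw [hpart]
  exact ((td c).bags_connected ⟨v, hvU⟩).preconnected

variable {S} in
theorem connected_glueBag_of_notMem (hU : IsSeparationAlong G S U) {v : V} (hv : v ∉ S) :
    ((bouquet (fun c => (td c).tree) r).induce {x | v ∈ glueBag S td x}).Connected := by
  obtain ⟨c, hvU⟩ := hU.exists_mem v hv
  have himage : {x | v ∈ glueBag S td x} =
      bouquetInclusion (fun c => (td c).tree) r c '' {i | ⟨v, hvU⟩ ∈ (td c).bag i} := by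
    ext x
    constructor
    · intro hx
      obtain _ | ⟨d, j⟩ := x
      · exact absurd hx hv
      obtain ⟨hvd, hj⟩ := (mem_glueBag_some S td).1 hx
      obtain rfl := hU.eq_of_mem d c v hv hvd hvU
      exact ⟨j, hj, rfl⟩
    · rintro ⟨i, hi, rfl⟩
      exact (mem_glueBag_some S td).2 ⟨hvU, hi⟩
  rw [himage]
  exact connected_induce_image _ ((td c).bags_connected ⟨v, hvU⟩)

/-- The tree-decomposition of `G` glued from tree-decompositions of the parts `G[U c]` of a
separation along `S`: the nodes `r c`, whose bags contain the vertices of `U c` in `S`, are joined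
to a new node with bag `S`. -/
def glue (hU : IsSeparationAlong G S U)
    (hr : ∀ c (x : U c), (x : V) ∈ S → x ∈ (td c).bag (r c)) :
    TreeDecomp G (Option (Σ c, ι c)) where
  tree := bouquet (fun c => (td c).tree) r
  isTree := isTree_bouquet fun c => (td c).isTree
  bag := glueBag S td
  bags_cover v := by
    by_cases hv : v ∈ S
    · exact ⟨none, hv⟩
    · obtain ⟨c, hvU⟩ := hU.exists_mem v hv
      obtain ⟨i, hi⟩ := (td c).bags_cover ⟨v, hvU⟩
      exact ⟨some ⟨c, i⟩, (mem_glueBag_some S td).2 ⟨hvU, hi⟩⟩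
  edges_covered u v huv := by
    obtain ⟨hu, hv⟩ | ⟨c, hu, hv⟩ := hU.exists_of_adj u v huv
    · exact ⟨none, hu, hv⟩
    · obtain ⟨i, hui, hvi⟩ := (td c).edges_covered (u := ⟨u, hu⟩) (v := ⟨v, hv⟩) huv
      exact ⟨some ⟨c, i⟩, (mem_glueBag_some S td).2 ⟨hu, hui⟩,
        (mem_glueBag_some S td).2 ⟨hv, hvi⟩⟩
  bags_connected v := by
    by_cases hv : v ∈ S
    · exact connected_glueBag_of_mem td r hr hv
    · exact connected_glueBag_of_notMem td r hU hv

end Glue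

end TreeDecomp

/-- `G` has a tree-decomposition of width at most `k`. This is stronger than `treewidth G ≤ k`,
since `treewidth G` is the junk value `0` when `G` has no tree-decomposition of bounded width. -/
def TreewidthLE {V : Type} (G : SimpleGraph V) (k : ℕ) : Prop :=
  ∃ (ι : Type) (td : TreeDecomp G ι), ∀ i, (td.bag i).card ≤ k + 1

theorem treewidthLE_card {V : Type} [Fintype V] (G : SimpleGraph V) :
    TreewidthLE G (Fintype.card V) :=
  ⟨Unit, TreeDecomp.single G, fun _ => Nat.le_succ _⟩

namespace TreewidthLE

variable {V : Type} {G : SimpleGraph V} {k l : ℕ}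

theorem treewidth_le (h : TreewidthLE G k) : treewidth G ≤ k :=
  Nat.sInf_le h

theorem treewidthLE_treewidth (h : TreewidthLE G k) : TreewidthLE G (treewidth G) :=
  Nat.sInf_mem (s := {k | TreewidthLE G k}) ⟨k, h⟩

theorem mono (h : TreewidthLE G k) (hkl : k ≤ l) : TreewidthLE G l := by
  obtain ⟨ι, td, htd⟩ := h
  exact ⟨ι, td, fun i => (htd i).trans (Nat.succ_le_succ hkl)⟩

theorem of_isContained {W : Type} {H : SimpleGraph W} (h : TreewidthLE G k) (hHG : H ⊑ G) :
    TreewidthLE H k := by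
  obtain ⟨ι, td, htd⟩ := h
  obtain ⟨f⟩ := hHG
  refine ⟨ι, td.comap f, fun i => le_trans ?_ (htd i)⟩
  refine Finset.card_le_card_of_injOn f (fun w hw => ?_) f.injective.injOn
  simpa [TreeDecomp.comap] using hw

theorem induce (h : TreewidthLE G k) (U : Set V) : TreewidthLE (G.induce U) k :=
  h.of_isContained ⟨Copy.induce G U⟩

theorem card_le_of_isClique (h : TreewidthLE G k) {K : Finset V} (hK : G.IsClique (K : Set V)) :
    K.card ≤ k + 1 := by
  obtain ⟨ι, td, htd⟩ := h
  obtain ⟨i, hi⟩ := td.exists_bag_of_isClique K.finite_toSet hK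
  exact (Finset.card_le_card (Finset.coe_subset.1 hi)).trans (htd i)

theorem card_le_of_isClique_of_subset {U : Set V} (h : TreewidthLE (G.induce U) k) {K : Finset V}
    (hK : G.IsClique (K : Set V)) (hKU : (K : Set V) ⊆ U) : K.card ≤ k + 1 := by
  classical
  obtain ⟨K, rfl⟩ : ∃ K' : Finset U, K'.map (Function.Embedding.subtype _) = K :=
    ⟨K.subtype (· ∈ U), Finset.subtype_map_of_mem hKU⟩
  rw [Finset.card_map]
  exact h.card_le_of_isClique (isClique_induce_iff.2 (by simpa using hK))

theorem finite_of_isClique (h : TreewidthLE G k) {K : Set V} (hK : G.IsClique K) : K.Finite := by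
  by_contra hinf
  obtain ⟨K', hK'K, hcard⟩ := Set.Infinite.exists_subset_card_eq hinf (k + 2)
  have := h.card_le_of_isClique (hK.subset hK'K)
  omega

theorem of_isSeparationAlong {κ : Type} {U : κ → Set V} {S : Finset V}
    (hS : G.IsClique (S : Set V)) (hcard : S.card ≤ k + 1) (hU : IsSeparationAlong G S U)
    (h : ∀ c, TreewidthLE (G.induce (U c)) k) : TreewidthLE G k := by
  choose ι td htd using h
  have hbag : ∀ c, ∃ i, ∀ x : U c, (x : V) ∈ S → x ∈ (td c).bag i := fun c =>
    (td c).exists_bag_of_isClique (K := Subtype.val ⁻¹' S)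
      (S.finite_toSet.preimage Subtype.val_injective.injOn)
      (isClique_induce_iff.2 (hS.subset (Set.image_preimage_subset _ _)))
  choose r hr using hbag
  refine ⟨_, TreeDecomp.glue S td r hU hr, ?_⟩
  rintro (_ | ⟨c, i⟩)
  · exact hcard
  · exact (Finset.card_map _).trans_le (htd c i)

end TreewidthLE

theorem treewidth_clique_minSep_general {V : Type} (G : SimpleGraph V)
    (hG : ∃ k, TreewidthLE G k) (S : Set V) (hclique : G.IsClique S)
    (hfull : ∃ C, IsFullCompOf G S C) :
    treewidth G = sSup {k : ℕ | ∃ C : Set V, IsCompOf G S C ∧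
      k = treewidth (G.induce (C ∪ nbhd G C))} := by
  obtain ⟨_, hk⟩ := hG
  obtain ⟨C₀, hC₀, hnbhd⟩ := hfull
  lift S to Finset V using hk.finite_of_isClique hclique
  set A := {k : ℕ | ∃ C : Set V, IsCompOf G S C ∧ k = treewidth (G.induce (C ∪ nbhd G C))}
  have hA : ∀ l ∈ A, l ≤ treewidth G := by
    rintro _ ⟨C, -, rfl⟩
    exact (hk.treewidthLE_treewidth.induce _).treewidth_le
  have hpart : ∀ C, IsCompOf G S C → TreewidthLE (G.induce (C ∪ nbhd G C)) (sSup A) :=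
    fun C hC => (hk.induce _).treewidthLE_treewidth.mono (le_csSup ⟨_, hA⟩ ⟨C, hC, rfl⟩)
  have hcard : S.card ≤ sSup A + 1 :=
    (hpart C₀ hC₀).card_le_of_isClique_of_subset hclique (hnbhd ▸ Set.subset_union_right)
  have hG : TreewidthLE G (sSup A) :=
    .of_isSeparationAlong hclique hcard (isSeparationAlong_components G S) fun C => hpart C.1 C.2
  exact hG.treewidth_le.antisymm (csSup_le ⟨_, C₀, hC₀, rfl⟩ hA)

/-- if `S` is a clique minimal separator of `G`, then `tw(G)` is the
maximum of `tw(G[C ∪ N_G(C)])` over components `C` of `G - S`. -/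
theorem treewidth_clique_minSep {V : Type} [Fintype V] (G : SimpleGraph V)
    (S : Set V) (hclique : G.IsClique S) (hminsep : IsMinSep G S) :
    treewidth G = sSup {k : ℕ | ∃ C : Set V, IsCompOf G S C ∧
      k = treewidth (G.induce (C ∪ nbhd G C))} := by
  obtain ⟨C, -, hC, -⟩ := hminsep
  exact treewidth_clique_minSep_general G ⟨_, treewidthLE_card G⟩ S hclique ⟨C, hC⟩
end
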